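/- Let (R, 𝔪, k) be a non-regular complete local one-dimensional domain with k algebraically closed of characteristic 0, Ω_R its universally finite module of differentials, R̄ = k[[t]] its integral closure with valuation v. Then R is quasihomogeneous if and only if v(tr_R(Ω_R)) = v(𝔪). -/

import Mathlib

open PowerSeries IsLocalRing

set_option synthInstance.maxHeartbeats 1000000
set_option maxHeartbeats 1000000

/-- The trace ideal of an `R`-module `M`: the ideal generated by all images of
`R`-linear maps `M → R`. -/
noncomputable def traceIdeal (R M : Type*) [CommRing R] [AddCommGroup M] [Module R M] :
    Ideal R :=
  ⨆ f : M →ₗ[R] R, LinearMap.range f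

theorem aux_dvd_all {k : Type*} [Field k] (f : PowerSeries k)
    (h : ∀ n : ℕ, (X : PowerSeries k) ^ n ∣ f) : f = 0 := by
  ext i
  have := (X_pow_dvd_iff.mp (h (i + 1))) i (Nat.lt_succ_self i)
  simpa using this

theorem aux_order_dvd {k : Type*} [Field k] (f : PowerSeries k) (n : ℕ) :
    (X : PowerSeries k) ^ n ∣ f ↔ (n : ℕ∞) ≤ f.order := by
  rw [X_pow_dvd_iff]
  constructor
  · exact nat_le_order f n
  · intro h i hi
    exact coeff_of_lt_order i (lt_of_lt_of_le (by exact_mod_cast hi) h)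

theorem aux_order_deriv {k : Type*} [Field k] [CharZero k] (f : PowerSeries k) (n : ℕ)
    (h : f.order = ((n + 1 : ℕ) : ℕ∞)) : (PowerSeries.derivative k f).order = (n : ℕ∞) := by
  rw [order_eq_nat] at h ⊢
  constructor
  · rw [coeff_derivative]
    exact mul_ne_zero h.1 (by exact_mod_cast Nat.succ_ne_zero n)
  · intro i hi
    rw [coeff_derivative, h.2 (i + 1) (by omega), zero_mul]

theorem aux_mem_max {k : Type*} [Field k] (S : Subalgebra k (PowerSeries k)) [IsLocalRing S]
    (f : S) : f ∈ maximalIdeal S ↔ constantCoeff (f : PowerSeries k) = 0 := by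
  have key : ∀ g : S, constantCoeff (g : PowerSeries k) = 0 → ¬ IsUnit g := by
    intro g hg hu
    have h1 := hu.map (S.val : S →+* PowerSeries k)
    have h2 : IsUnit (constantCoeff (g : PowerSeries k)) :=
      h1.map (constantCoeff (R := k))
    rw [hg] at h2
    exact not_isUnit_zero h2
  constructor
  · intro hf
    by_contra h0
    set a := constantCoeff (f : PowerSeries k) with ha
    have hf' : a⁻¹ • f ∈ maximalIdeal S := by
      rw [Algebra.smul_def]
      exact Ideal.mul_mem_left _ _ hf
    rw [mem_maximalIdeal, mem_nonunits_iff] at hf'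
    have := isUnit_or_isUnit_one_sub_self (a⁻¹ • f)
    rcases this with h | h
    · exact hf' h
    · refine key _ ?_ h
      simp [← ha, h0]
  · intro h
    exact key f h

theorem aux_poly {k : Type*} [Field k] (S : Subalgebra k (PowerSeries k))
    (c : ℕ) (hc : ∀ i : ℕ, c ≤ i → (X : PowerSeries k) ^ i ∈ S) (p : Polynomial k) :
    (X : PowerSeries k) ^ c * (p : PowerSeries k) ∈ S := by
  induction p using Polynomial.induction_on' with
  | add p q hp hq =>
    rw [Polynomial.coe_add, mul_add]; exact S.add_mem hp hq
  | monomial n a =>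
    rw [Polynomial.coe_monomial, monomial_eq_C_mul_X_pow, mul_left_comm, ← pow_add,
      ← smul_eq_C_mul]
    exact S.smul_mem (hc _ (by omega)) a

theorem aux_cond {k : Type*} [Field k] (S : Subalgebra k (PowerSeries k)) [IsLocalRing S]
    [IsAdicComplete (maximalIdeal S) S]
    (c : ℕ) (hc0 : 1 ≤ c) (hc : ∀ i : ℕ, c ≤ i → (X : PowerSeries k) ^ i ∈ S)
    (G : PowerSeries k) : (X : PowerSeries k) ^ c * G ∈ S := by
  let s : ℕ → S := fun n => ⟨X ^ c * (trunc (c * n) G : PowerSeries k), aux_poly S c hc _⟩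
  let x : S := ⟨X ^ c, hc c le_rfl⟩
  have hx : x ∈ maximalIdeal S := by
    rw [aux_mem_max]
    simp [x]; omega
  have hpow : ∀ (n : ℕ) (y : S), y ∈ maximalIdeal S ^ n →
      (X : PowerSeries k) ^ n ∣ (y : PowerSeries k) := by
    intro n y hy
    have h1 : maximalIdeal S ≤ Ideal.comap (S.val : S →+* PowerSeries k) (Ideal.span {X}) := by
      intro z hz
      rw [aux_mem_max] at hz
      rw [Ideal.mem_comap, Ideal.mem_span_singleton]
      exact X_dvd_iff.mpr hz
    have h2 := (Ideal.pow_right_mono h1 n).trans (Ideal.le_comap_pow _ n) hy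
    rw [Ideal.mem_comap, Ideal.span_singleton_pow, Ideal.mem_span_singleton] at h2
    exact h2
  obtain ⟨L, hL⟩ := IsPrecomplete.prec' (I := maximalIdeal S) (M := S) s (by
    intro m n hmn
    rw [SModEq.sub_mem, smul_eq_mul, Ideal.mul_top]
    have : (Polynomial.X : Polynomial k) ^ (c * m) ∣ trunc (c * m) G - trunc (c * n) G := by
      rw [Polynomial.X_pow_dvd_iff]
      intro d hd
      have : d < c * n := lt_of_lt_of_le hd (Nat.mul_le_mul_left _ hmn)
      simp [coeff_trunc, hd, this]
    obtain ⟨q, hq⟩ := this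
    have : s m - s n = x ^ m * ⟨X ^ c * (q : PowerSeries k), aux_poly S c hc _⟩ := by
      apply Subtype.ext
      have h := congrArg (fun p : Polynomial k => (p : PowerSeries k)) hq
      simp only [Polynomial.coe_sub, Polynomial.coe_mul, Polynomial.coe_pow,
        Polynomial.coe_X] at h
      simp only [s, x, AddSubgroupClass.coe_sub, MulMemClass.coe_mul, SubmonoidClass.coe_pow]
      rw [← mul_sub, h, pow_mul]
      ring
    rw [this]
    exact Ideal.mul_mem_right _ _ (Ideal.pow_mem_pow hx m))
  have : X ^ c * G - (L : PowerSeries k) = 0 := by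
    apply aux_dvd_all
    intro n
    have h1 := hL n
    rw [SModEq.sub_mem, smul_eq_mul, Ideal.mul_top] at h1
    have h2 := hpow n _ h1
    have h3 : (X : PowerSeries k) ^ n ∣ G - (trunc (c * n) G : PowerSeries k) := by
      rw [X_pow_dvd_iff]
      intro m hm
      have : m < c * n := by nlinarith
      simp [coeff_trunc, this]
    have h4 : X ^ c * G - (L : PowerSeries k) =
        X ^ c * (G - (trunc (c * n) G : PowerSeries k)) + ((s n - L : S) : PowerSeries k) := by
      simp only [s, AddSubgroupClass.coe_sub]; ring
    rw [h4]
    exact dvd_add (h3.mul_left _) h2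
  rw [sub_eq_zero.mp this]
  exact L.2

theorem aux_E {k : Type*} [Field k] [CharZero k] (S : Subalgebra k (PowerSeries k))
    (c : ℕ) (hc0 : 1 ≤ c) (hS : ∀ G : PowerSeries k, (X : PowerSeries k) ^ c * G ∈ S)
    (E : S →ₗ[k] PowerSeries k)
    (hE : ∀ a b : S, E (a * b) = a * E b + b * E a)
    (x : S) (hx : (x : PowerSeries k) = X ^ c) (hEx : E x = 0) (f : S) : E f = 0 := by
  have hpow : ∀ (a : S) (n : ℕ), E (a ^ (n + 1)) = (n + 1) * (a : PowerSeries k) ^ n * E a := by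
    intro a n
    induction n with
    | zero => simp
    | succ n ih =>
      rw [pow_succ a, hE, ih]
      push_cast
      ring
  have hmono : ∀ (i : ℕ) (y : S), (y : PowerSeries k) = X ^ c * X ^ i → E y = 0 := by
    intro i y hy
    obtain ⟨d, rfl⟩ : ∃ d, c = d + 1 := ⟨c - 1, by omega⟩
    have h1 : y ^ (d + 1) = x ^ (d + i + 1) := by
      apply Subtype.ext
      push_cast
      rw [hy, hx]; ring
    have h2 := congrArg E h1
    rw [hpow, hpow, hEx, mul_zero] at h2
    rcases mul_eq_zero.mp h2 with h3 | h3
    · exfalso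
      rcases mul_eq_zero.mp h3 with h4 | h4
      · have := congrArg (constantCoeff (R := k)) h4
        simp at this
        exact Nat.cast_add_one_ne_zero d this
      · have := eq_zero_of_pow_eq_zero h4
        rw [hy] at this
        simp [X_ne_zero] at this
    · exact h3
  have hpoly : ∀ (p : Polynomial k) (y : S), (y : PowerSeries k) = X ^ c * (p : PowerSeries k) →
      E y = 0 := by
    intro p
    induction p using Polynomial.induction_on' with
    | add p q hp hq =>
      intro y hy
      have : y = ⟨X ^ c * (p : PowerSeries k), hS _⟩ + ⟨X ^ c * (q : PowerSeries k), hS _⟩ := by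
        apply Subtype.ext
        push_cast
        rw [hy, Polynomial.coe_add, mul_add]
      rw [this, map_add, hp _ rfl, hq _ rfl, add_zero]
    | monomial n a =>
      intro y hy
      have : y = a • ⟨X ^ c * X ^ n, hS _⟩ := by
        apply Subtype.ext
        rw [hy, Polynomial.coe_monomial, monomial_eq_C_mul_X_pow]
        simp only [SetLike.val_smul]
        rw [smul_eq_C_mul]; ring
      rw [this, map_smul, hmono n _ rfl, smul_zero]
  have hall : ∀ (G : PowerSeries k) (y : S), (y : PowerSeries k) = X ^ c * G → E y = 0 := by
    intro G y hy
    apply aux_dvd_all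
    intro n
    have h3 : (X : PowerSeries k) ^ (c * (n + 1)) ∣
        G - (trunc (c * (n + 1)) G : PowerSeries k) := by
      rw [X_pow_dvd_iff]
      intro m hm
      simp [coeff_trunc, hm]
    obtain ⟨G', hG'⟩ := h3
    have : y = ⟨X ^ c * (trunc (c * (n + 1)) G : PowerSeries k), hS _⟩
        + x ^ (n + 1) * ⟨X ^ c * G', hS _⟩ := by
      apply Subtype.ext
      push_cast
      rw [hy, hx, ← pow_mul]
      linear_combination X ^ c * hG'
    rw [this, map_add, hpoly _ _ rfl, hE, hpow, hEx, zero_add, mul_zero, mul_zero, add_zero]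
    apply Dvd.dvd.mul_right
    push_cast
    rw [hx, ← pow_mul]
    exact pow_dvd_pow _ (by nlinarith)
  have h := hall (f : PowerSeries k) (x * f) (by push_cast; rw [hx])
  rw [hE, hEx, mul_zero, add_zero, hx] at h
  rcases mul_eq_zero.mp h with h | h
  · exact absurd h (pow_ne_zero _ X_ne_zero)
  · exact h

theorem aux_D {k : Type*} [Field k] [CharZero k] (S : Subalgebra k (PowerSeries k))
    (c : ℕ) (hS : ∀ G : PowerSeries k, (X : PowerSeries k) ^ (c + 1) * G ∈ S)
    (D : Derivation k S S) : ∃ H : PowerSeries k, ∀ f : S,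
      X ^ c * (D f : PowerSeries k) = PowerSeries.derivative k (f : PowerSeries k) * H := by
  have hc1 : ((c : k) + 1) ≠ 0 := Nat.cast_add_one_ne_zero c
  let x : S := ⟨X ^ (c + 1) * 1, hS 1⟩
  have hx : (x : PowerSeries k) = X ^ (c + 1) := by simp [x]
  have hdx : PowerSeries.derivative k (x : PowerSeries k) = C ((c : k) + 1) * X ^ c := by
    rw [hx]
    simp [Derivation.leibniz_pow]
  let E : S →ₗ[k] PowerSeries k :=
    { toFun := fun f => PowerSeries.derivative k (x : PowerSeries k) * (D f : PowerSeries k)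
        - PowerSeries.derivative k (f : PowerSeries k) * (D x : PowerSeries k)
      map_add' := by
        intro a b
        simp only [map_add, AddMemClass.coe_add]
        ring
      map_smul' := by
        intro a b
        simp only [Derivation.map_smul, SetLike.val_smul, RingHom.id_apply, smul_sub, mul_smul_comm,
          smul_mul_assoc] }
  refine ⟨C ((c : k) + 1)⁻¹ * (D x : PowerSeries k), fun f => ?_⟩
  have h : E f = 0 := by
    refine aux_E S (c + 1) (by omega) hS E ?_ x hx ?_ f
    · intro a b
      simp only [E, LinearMap.coe_mk, AddHom.coe_mk, Derivation.leibniz, smul_eq_mul,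
        AddMemClass.coe_add, MulMemClass.coe_mul]
      ring
    · simp only [E, LinearMap.coe_mk, AddHom.coe_mk]
      ring
  simp only [E, LinearMap.coe_mk, AddHom.coe_mk, hdx] at h
  have h5 : (C ((c : k) + 1)⁻¹ : PowerSeries k) * C ((c : k) + 1) = 1 := by
    rw [← map_mul, inv_mul_cancel₀ hc1, map_one]
  linear_combination (C ((c : k) + 1)⁻¹ : PowerSeries k) * h - X ^ c * (D f : PowerSeries k) * h5

theorem aux_reg {k : Type*} [Field k] (S : Subalgebra k (PowerSeries k)) [IsLocalRing S]
    (c : ℕ) (hS : ∀ G : PowerSeries k, (X : PowerSeries k) ^ c * G ∈ S)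
    (hreg : ¬ (maximalIdeal S).IsPrincipal) (x : S)
    (hx : (x : PowerSeries k).order = 1) : False := by
  have hx' : ((1 : ℕ) : ℕ∞) = (x : PowerSeries k).order := by rw [hx]; rfl
  have hx1 : (X : PowerSeries k) ^ 1 ∣ (x : PowerSeries k) := by
    rw [aux_order_dvd, ← hx']
  obtain ⟨u, hu⟩ := hx1
  have hu0 : constantCoeff u ≠ 0 := by
    have h := (order_eq_nat.mp hx'.symm).1
    rw [hu] at h
    simpa [coeff_succ_X_mul] using h
  have key : ∀ (N : ℕ) (q : PowerSeries k), ∃ s : S, (X : PowerSeries k) ^ N ∣ q - s := by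
    intro N q
    induction N with
    | zero => exact ⟨0, by simp⟩
    | succ N ih =>
      obtain ⟨s, r, hr⟩ := ih
      refine ⟨s + (constantCoeff r * (constantCoeff u ^ N)⁻¹) • x ^ N, ?_⟩
      have : q - ((s + (constantCoeff r * (constantCoeff u ^ N)⁻¹) • x ^ N : S) : PowerSeries k)
          = X ^ N * (r - C (constantCoeff r * (constantCoeff u ^ N)⁻¹) * u ^ N) := by
        push_cast
        rw [smul_eq_C_mul, hu]
        linear_combination hr
      rw [this, pow_succ]
      apply mul_dvd_mul_left
      rw [X_dvd_iff]
      simp [hu0]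
  have hall : ∀ q : PowerSeries k, q ∈ S := by
    intro q
    obtain ⟨s, r, hr⟩ := key c q
    rw [eq_add_of_sub_eq hr]
    exact S.add_mem (hS r) s.2
  apply hreg
  refine ⟨⟨⟨X, hall X⟩, ?_⟩⟩
  apply le_antisymm
  · intro f hf
    rw [aux_mem_max] at hf
    obtain ⟨g, hg⟩ := X_dvd_iff.mpr hf
    refine Ideal.mem_span_singleton'.mpr ⟨⟨g, hall g⟩, ?_⟩
    apply Subtype.ext
    push_cast
    rw [hg, mul_comm]
  · refine (Ideal.span_singleton_le_iff_mem _).mpr ?_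
    rw [aux_mem_max]
    simp

theorem aux_ord {k : Type*} [Field k] [CharZero k] (c : ℕ) (f g H : PowerSeries k)
    (h : X ^ c * g = PowerSeries.derivative k f * H) (n d : ℕ)
    (hf : f.order = ((n + 1 : ℕ) : ℕ∞)) (hH : H.order = (d : ℕ∞)) :
    ∃ m : ℕ, g.order = (m : ℕ∞) ∧ c + m = n + d := by
  have h1 := congrArg PowerSeries.order h
  rw [order_mul, order_mul, order_X_pow, hH, aux_order_deriv f n hf] at h1
  have hg : g ≠ 0 := by
    rintro rfl
    rw [order_zero, add_top] at h1
    exact absurd h1.symm (by exact_mod_cast ENat.coe_ne_top (n + d))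
  refine ⟨g.order.toNat, (coe_toNat_order hg).symm, ?_⟩
  rw [← coe_toNat_order hg] at h1
  exact_mod_cast h1

/-- If `D f ≠ 0`, one may subtract the constant term. -/
theorem aux_sub {k : Type*} [Field k] (S : Subalgebra k (PowerSeries k))
    (D : Derivation k S S) (f : S) (hf : (D f : PowerSeries k) ≠ 0) :
    ∃ (g : S) (n : ℕ), D g = D f ∧ (g : PowerSeries k).order = ((n + 1 : ℕ) : ℕ∞) := by
  let a := constantCoeff (f : PowerSeries k)
  let g : S := f - algebraMap k S a
  have hDg : D g = D f := by simp [g]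
  have hg0 : (g : PowerSeries k) ≠ 0 := by
    intro h
    have : g = 0 := Subtype.ext h
    rw [this, map_zero] at hDg
    rw [← hDg] at hf
    exact hf rfl
  have hgc : constantCoeff (g : PowerSeries k) = 0 := by
    have : (g : PowerSeries k) = (f : PowerSeries k) - C a := rfl
    rw [this]
    simp [a]
  have h1 := one_le_order_iff_constCoeff_eq_zero.mpr hgc
  rw [← coe_toNat_order hg0] at h1
  have h2 : 1 ≤ (g : PowerSeries k).order.toNat := by exact_mod_cast h1
  refine ⟨g, (g : PowerSeries k).order.toNat - 1, hDg, ?_⟩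
  rw [Nat.sub_add_cancel h2, coe_toNat_order hg0]

theorem aux_max {k : Type*} [Field k] [CharZero k] (S : Subalgebra k (PowerSeries k))
    [IsLocalRing S]
    (c : ℕ) (hS : ∀ G : PowerSeries k, (X : PowerSeries k) ^ (c + 1) * G ∈ S)
    (e : ℕ) (hge : ∃ g : S, (g : PowerSeries k).order = ((e + 1 : ℕ) : ℕ∞))
    (he1 : 1 ≤ e)
    (hmin : ∀ (g : S) (n : ℕ), (g : PowerSeries k).order = ((n + 1 : ℕ) : ℕ∞) → e ≤ n)
    (D : Derivation k S S) (f : S) : D f ∈ maximalIdeal S := by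
  rw [aux_mem_max]
  by_contra h0
  obtain ⟨H, hH⟩ := aux_D S c hS D
  have hDf : (D f : PowerSeries k) ≠ 0 := by
    intro h; rw [h] at h0; simp at h0
  have hH0 : H ≠ 0 := by
    rintro rfl
    have := hH f
    rw [mul_zero] at this
    rcases mul_eq_zero.mp this with h | h
    · exact pow_ne_zero _ X_ne_zero h
    · exact hDf h
  have hd := (coe_toNat_order hH0).symm
  set d := H.order.toNat
  obtain ⟨f0, n, hf0, hn⟩ := aux_sub S D f hDf
  obtain ⟨m, hm, hmn⟩ := aux_ord c _ _ H (hH f0) n d hn hd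
  have hm0 : m = 0 := by
    rw [hf0] at hm
    by_contra hm0
    apply h0
    rw [← coeff_zero_eq_constantCoeff_apply]
    exact (order_eq_nat.mp hm).2 0 (by omega)
  subst hm0
  obtain ⟨g, hg⟩ := hge
  obtain ⟨m, hm, hmn'⟩ := aux_ord c _ _ H (hH g) e d hg hd
  have hen := hmin f0 n hn
  have hcd : c = e + d := by omega
  have hex : ∃ j : ℕ, ¬ (e + 1) ∣ j ∧ ∃ y : S, (y : PowerSeries k).order = (j : ℕ∞) := by
    refine ⟨(e + 1) * (c + 1) + 1, ?_, ⟨X ^ (c + 1) * X ^ (e * (c + 1) + 1), hS _⟩, ?_⟩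
    · intro h
      have h2 := (Nat.dvd_add_right (Dvd.intro _ rfl)).mp h
      have := Nat.le_of_dvd one_pos h2
      omega
    · simp only
      rw [← pow_add, order_X_pow]
      congr 1
      ring
  classical
  obtain ⟨h1, y, hy⟩ := Nat.find_spec hex
  have hmin' := fun j => Nat.find_min hex (m := j)
  generalize Nat.find hex = j at h1 hy hmin'
  cases j with
  | zero => exact h1 (dvd_zero _)
  | succ j =>
    obtain ⟨m', hm', hmj⟩ := aux_ord c _ _ H (hH y) j d hy hd
    refine hmin' m' (by omega) ⟨?_, D y, hm'⟩
    intro h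
    apply h1
    have : j + 1 = m' + (e + 1) := by omega
    rw [this]
    exact dvd_add h dvd_rfl

theorem aux_surj {k : Type*} [Field k] [CharZero k] (S : Subalgebra k (PowerSeries k))
    (c : ℕ) (hS : ∀ G : PowerSeries k, (X : PowerSeries k) ^ (c + 1) * G ∈ S)
    (D : Derivation k S S) (H : PowerSeries k)
    (hH : ∀ f : S,
      X ^ c * (D f : PowerSeries k) = PowerSeries.derivative k (f : PowerSeries k) * H)
    (hord : H.order = ((c + 1 : ℕ) : ℕ∞)) (y : S)
    (hy : constantCoeff (y : PowerSeries k) = 0) : ∃ f : S, D f = y := by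
  have hdv : (X : PowerSeries k) ^ (c + 1) ∣ H := by rw [aux_order_dvd, hord]
  obtain ⟨u, rfl⟩ := hdv
  have hu : constantCoeff u ≠ 0 := by
    have h := (order_eq_nat.mp hord).1
    rw [coeff_X_pow_mul'] at h
    simpa using h
  have hD : ∀ f : S, (D f : PowerSeries k) =
      X * (u * PowerSeries.derivative k (f : PowerSeries k)) := by
    intro f
    have h := hH f
    have h' : X ^ c * (D f : PowerSeries k) =
        X ^ c * (X * (u * PowerSeries.derivative k (f : PowerSeries k))) := by
      rw [h]; ring
    exact mul_left_cancel₀ (pow_ne_zero _ X_ne_zero) h'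
  have key : ∀ (j n : ℕ), n + j = c → ∀ y : S, (X : PowerSeries k) ^ (n + 1) ∣ y →
      ∃ f : S, D f = y := by
    intro j
    induction j with
    | zero =>
      intro n hn y hy
      obtain rfl : n = c := by omega
      obtain ⟨w, hw⟩ := hy
      let F : PowerSeries k := X ^ (n + 1) *
        PowerSeries.mk (fun i => coeff i (u⁻¹ * w) * ((n + i + 1 : ℕ) : k)⁻¹)
      have hF : X * PowerSeries.derivative k F = X ^ (n + 1) * (u⁻¹ * w) := by
        ext i
        cases i with
        | zero => simp
        | succ i =>
          rw [coeff_succ_X_mul, coeff_derivative]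
          simp only [F]
          rw [coeff_X_pow_mul', coeff_X_pow_mul']
          split_ifs with hi
          · rw [coeff_mk]
            have h1 : n + (i + 1 - (n + 1)) + 1 = i + 1 := by omega
            rw [h1, mul_assoc]
            have h2 : ((i + 1 : ℕ) : k)⁻¹ * ((i : k) + 1) = 1 := by
              push_cast
              exact inv_mul_cancel₀ (Nat.cast_add_one_ne_zero i)
            rw [h2, mul_one]
          · simp
      refine ⟨⟨F, hS _⟩, Subtype.ext ?_⟩
      rw [hD, mul_left_comm, hF, hw, mul_left_comm, ← mul_assoc u,
        PowerSeries.mul_inv_cancel _ hu, one_mul]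
    | succ j ih =>
      intro n hn y hy
      obtain ⟨w, hw⟩ := hy
      let a : k := (((n : k) + 1) * constantCoeff u)⁻¹
      have hn1 : (n : k) + 1 ≠ 0 := Nat.cast_add_one_ne_zero n
      have hdv : (X : PowerSeries k) ^ (n + 1 + 1) ∣ ((y - D (a • y) : S) : PowerSeries k) := by
        have : ((y - D (a • y) : S) : PowerSeries k) = X ^ (n + 1) *
            (w - C a * u * (C ((n : k) + 1) * w + X * PowerSeries.derivative k w)) := by
          have h3 : PowerSeries.derivative k ((X : PowerSeries k) ^ (n + 1) * w) =
              X ^ n * (C ((n : k) + 1) * w + X * PowerSeries.derivative k w) := by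
            rw [Derivation.leibniz, Derivation.leibniz_pow]
            simp
            ring
          rw [Derivation.map_smul]
          simp only [AddSubgroupClass.coe_sub, SetLike.val_smul]
          rw [hD, hw, h3, smul_eq_C_mul]
          ring
        rw [this, pow_succ (n := n + 1)]
        apply mul_dvd_mul_left
        rw [X_dvd_iff]
        simp [a]
        field_simp
        simp
      obtain ⟨f, hf⟩ := ih (n + 1) (by omega) _ hdv
      exact ⟨f + a • y, by rw [map_add, hf]; ring⟩
  exact key c 0 (by omega) y (by simpa using X_dvd_iff.mpr hy)

theorem aux_range {k : Type*} [Field k] (S : Subalgebra k (PowerSeries k))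
    (φ : (Ω[S⁄k]) →ₗ[S] S) (J : Ideal S)
    (h : ∀ f : S, φ.compDer (KaehlerDifferential.D k S) f ∈ J) :
    LinearMap.range φ ≤ J := by
  rw [LinearMap.range_eq_map, ← KaehlerDifferential.span_range_derivation, Submodule.map_span,
    Submodule.span_le]
  rintro _ ⟨_, ⟨f, rfl⟩, rfl⟩
  exact h f

/-- Let `(R, 𝔪, k)` be a non-regular complete local one-dimensional domain with `k`
algebraically closed of characteristic `0`, realized as a subalgebra `S ⊆ k⟦t⟧` with
integral closure `k⟦t⟧` (nonzero conductor), `Ω_S` its module of differentials and `v`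
the `t`-adic valuation, extended to ideals by taking minimal valuations.  Then `R` is
quasihomogeneous (`Ω_S` surjects onto `𝔪`) if and only if `v(tr_R(Ω_S)) = v(𝔪)`. -/
theorem stmt11 (k : Type*) [Field k] [IsAlgClosed k] [CharZero k]
    (S : Subalgebra k (PowerSeries k)) [IsLocalRing S] [IsNoetherianRing S]
    [IsAdicComplete (maximalIdeal S) S]
    (hdim : ringKrullDim S = 1)
    -- `k⟦t⟧` is the integral closure of `S` in its fraction field: the conductor is nonzero
    (c : ℕ) (hc : ∀ i : ℕ, c ≤ i → (X : PowerSeries k) ^ i ∈ S)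
    -- `S` is non-regular, i.e. its maximal ideal is not principal
    (hreg : ¬ (maximalIdeal S).IsPrincipal)
    (vtr vm : ℕ)
    -- `vtr = v(tr_S(Ω_S))`
    (hvtr : IsLeast {m : ℕ | ∃ x : S, x ∈ traceIdeal S (Ω[S⁄k]) ∧
      (x : PowerSeries k) ≠ 0 ∧ (x : PowerSeries k).order = (m : ℕ∞)} vtr)
    -- `vm = v(𝔪)`
    (hvm : IsLeast {m : ℕ | ∃ x : S, x ∈ maximalIdeal S ∧
      (x : PowerSeries k) ≠ 0 ∧ (x : PowerSeries k).order = (m : ℕ∞)} vm) :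
    (∃ φ : (Ω[S⁄k]) →ₗ[S] S, LinearMap.range φ = (maximalIdeal S : Ideal S)) ↔
      vtr = vm := by
  have hS : ∀ G : PowerSeries k, (X : PowerSeries k) ^ (c + 1) * G ∈ S :=
    aux_cond S (c + 1) (by omega) (fun i hi => hc i (by omega))
  obtain ⟨⟨g, hgm, hg0, hg⟩, hleast⟩ := hvm
  have hvm0 : vm ≠ 0 := by
    rintro rfl
    rw [aux_mem_max, ← order_ne_zero_iff_constCoeff_eq_zero] at hgm
    exact hgm (by exact_mod_cast hg)
  obtain ⟨e, rfl⟩ : ∃ e, vm = e + 1 := ⟨vm - 1, by omega⟩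
  have he1 : 1 ≤ e := by
    by_contra h
    obtain rfl : e = 0 := by omega
    exact aux_reg S (c + 1) hS hreg g (by simpa using hg)
  have hmin : ∀ (g : S) (n : ℕ), (g : PowerSeries k).order = ((n + 1 : ℕ) : ℕ∞) → e ≤ n := by
    intro g n h
    have : e + 1 ≤ n + 1 := by
      refine hleast ⟨g, ?_, ?_, h⟩
      · rw [aux_mem_max, ← order_ne_zero_iff_constCoeff_eq_zero, h]
        exact_mod_cast Nat.succ_ne_zero n
      · intro h0
        rw [h0, order_zero] at h
        exact ENat.coe_ne_top _ h.symm
    omega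
  have hmax := aux_max S c hS e ⟨g, hg⟩ he1 hmin
  have hrange : ∀ φ : (Ω[S⁄k]) →ₗ[S] S, LinearMap.range φ ≤ maximalIdeal S := fun φ =>
    aux_range S φ _ (hmax _)
  have htr : traceIdeal S (Ω[S⁄k]) ≤ maximalIdeal S := iSup_le hrange
  constructor
  · rintro ⟨φ, hφ⟩
    have h : traceIdeal S (Ω[S⁄k]) = maximalIdeal S := by
      apply le_antisymm htr
      rw [← hφ]
      exact le_iSup (fun f : (Ω[S⁄k]) →ₗ[S] S => LinearMap.range f) φ
    rw [h] at hvtr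
    exact hvtr.unique ⟨⟨g, hgm, hg0, hg⟩, hleast⟩
  · rintro rfl
    obtain ⟨⟨x, hx, hx0, hxo⟩, -⟩ := hvtr
    let J : Ideal S := Ideal.comap (S.val : S →+* PowerSeries k) (Ideal.span {X ^ (e + 1 + 1)})
    have hJ : ∀ y : S, y ∈ J ↔ ((e + 1 + 1 : ℕ) : ℕ∞) ≤ (y : PowerSeries k).order := by
      intro y
      rw [← aux_order_dvd, Ideal.mem_comap, Ideal.mem_span_singleton]
      rfl
    have hex : ∃ (φ : (Ω[S⁄k]) →ₗ[S] S) (f : S),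
        φ.compDer (KaehlerDifferential.D k S) f ∉ J := by
      by_contra hcon
      push Not at hcon
      have h1 : traceIdeal S (Ω[S⁄k]) ≤ J := iSup_le fun φ => aux_range S φ J (hcon φ)
      have h2 := (hJ x).mp (h1 hx)
      rw [hxo] at h2
      have : e + 1 + 1 ≤ e + 1 := by exact_mod_cast h2
      omega
    obtain ⟨φ, f, hf⟩ := hex
    have hDm := hmax (φ.compDer (KaehlerDifferential.D k S))
    have hrφ := hrange φ
    refine ⟨φ, le_antisymm hrφ ?_⟩
    have hr : ∀ y, φ.compDer (KaehlerDifferential.D k S) y ∈ LinearMap.range φ :=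
      fun y => ⟨KaehlerDifferential.D k S y, rfl⟩
    generalize φ.compDer (KaehlerDifferential.D k S) = D at hf hDm hr
    obtain ⟨H, hH⟩ := aux_D S c hS D
    have hDf : (D f : PowerSeries k) ≠ 0 := by
      intro h
      apply hf
      rw [hJ, h, order_zero]
      exact le_top
    have hH0 : H ≠ 0 := by
      rintro rfl
      have := hH f
      rw [mul_zero] at this
      rcases mul_eq_zero.mp this with h | h
      · exact pow_ne_zero _ X_ne_zero h
      · exact hDf h
    have hd := (coe_toNat_order hH0).symm
    obtain ⟨f0, n, hf0, hn⟩ := aux_sub S D f hDf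
    obtain ⟨m, hm, hmn⟩ := aux_ord c _ _ H (hH f0) n _ hn hd
    obtain ⟨m', hm', hmn'⟩ := aux_ord c _ _ H (hH g) e _ hg hd
    have hen := hmin f0 n hn
    have hpos : ∀ (y : S) (i : ℕ), (D y : PowerSeries k).order = (i : ℕ∞) → e + 1 ≤ i := by
      intro y i hi
      refine hleast ⟨D y, hDm y, ?_, hi⟩
      intro h0
      rw [h0, order_zero] at hi
      exact ENat.coe_ne_top _ hi.symm
    have h1 := hpos _ _ hm
    have h2 := hpos _ _ hm'
    have h3 : m ≤ e + 1 := by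
      rw [hJ, ← hf0, hm] at hf
      have : ¬ (e + 1 + 1 ≤ m) := fun h => hf (by exact_mod_cast h)
      omega
    have hdc : H.order.toNat = c + 1 := by omega
    rw [hdc] at hd
    intro y hy
    rw [aux_mem_max] at hy
    obtain ⟨z, rfl⟩ := aux_surj S c hS D H hH hd y hy
    exact hr z
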